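/- Let P = (P₁,…,Pₙ) be a positive regular polynomial n-tuple, n ≥ 2, and for each j let P̃_j(t) = P_j(t·ε_j) and D_j = {w ∈ ℂ : P̃_j(|w|²) < 1}. Then P is admissible if and only if {φ(z) : z ∈ Δⁿ_P} = D₁ × (D₂∖{0}) × ⋯ × (Dₙ∖{0}). -/

import Mathlib

/-- The map `φ(z) = (z₁/z₂, …, z_{n−1}/zₙ, zₙ)` (0-indexed over `Fin n`). -/
noncomputable def phi {n : ℕ} (z : Fin n → ℂ) : Fin n → ℂ :=
  fun j => if h : (j : ℕ) + 1 < n then z j / z ⟨(j : ℕ) + 1, h⟩ else z j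

/-- The P-triangle `Δⁿ_P`. -/
def HartogsTriangle {n : ℕ} (P : Fin n → MvPolynomial (Fin n) ℝ) : Set (Fin n → ℂ) :=
  {z | (∀ j : Fin n, 1 ≤ (j : ℕ) → z j ≠ 0) ∧
       ∀ j : Fin n, MvPolynomial.eval (fun k => ‖phi z k‖ ^ 2) (P j) < 1}

/-!
Telescoping shows that `φ` maps the `P`-triangle onto the set of all `w` with `w₂, …, wₙ ≠ 0` and
`P_j(|w|²) < 1` for every `j`, so the theorem compares these conditions with the one-variable
conditions `P_j(|w_j|² ε_j) < 1`. They coincide if each `P_j` involves only `z_j`. Conversely, let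
`t_j > 0` solve `P_j(t_j ε_j) = 1`. For `0 < s < 1` the point `s t` satisfies all the one-variable
conditions, so if the sets agree then `P_j(s t) < 1`, and `P_j(t) ≤ 1` in the limit `s → 1`. But a
monomial of `P_j` involving some `z_k` with `k ≠ j` vanishes at `t_j ε_j` and is positive at `t`,
which would force `P_j(t) > P_j(t_j ε_j) = 1`.
-/

section Eval

open MvPolynomial

variable {σ R : Type*} [CommSemiring R]

theorem finsuppSingle_prod_piSingle_pow [DecidableEq σ] (j : σ) (m : ℕ) (t : R) :
    ((Finsupp.single j m).prod fun i e ↦ (Pi.single j t : σ → R) i ^ e) = t ^ m := by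
  rw [Finsupp.prod_single_index, Pi.single_eq_same]
  exact pow_zero _

variable [PartialOrder R] {p : MvPolynomial σ R} {x y : σ → R}

theorem finsupp_prod_pow_le_prod_pow [IsOrderedRing R] (d : σ →₀ ℕ) (hx : 0 ≤ x) (hxy : x ≤ y) :
    (d.prod fun i e ↦ x i ^ e) ≤ d.prod fun i e ↦ y i ^ e :=
  Finset.prod_le_prod (fun i _ ↦ pow_nonneg (hx i) _) fun i _ ↦ pow_le_pow_left₀ (hx i) (hxy i) _

theorem coeff_mul_prod_le_eval [IsOrderedRing R] (hp : ∀ d, 0 ≤ p.coeff d) (hx : 0 ≤ x)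
    {d : σ →₀ ℕ} (hd : d ∈ p.support) :
    (p.coeff d * d.prod fun i e ↦ x i ^ e) ≤ eval x p := by
  rw [eval_eq]
  exact Finset.single_le_sum (f := fun d ↦ p.coeff d * d.prod fun i e ↦ x i ^ e)
    (fun c _ ↦ mul_nonneg (hp c) (Finset.prod_nonneg fun i _ ↦ pow_nonneg (hx i) _)) hd

variable [IsStrictOrderedRing R]

theorem eval_lt_eval_of_prod_lt_prod (hp : ∀ d, 0 ≤ p.coeff d) (hx : 0 ≤ x) (hxy : x ≤ y)
    {d : σ →₀ ℕ} (hd : d ∈ p.support)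
    (hlt : (d.prod fun i e ↦ x i ^ e) < d.prod fun i e ↦ y i ^ e) :
    eval x p < eval y p := by
  have coeff_pos : 0 < p.coeff d := (hp d).lt_of_ne' (mem_support_iff.mp hd)
  rw [eval_eq, eval_eq]
  exact Finset.sum_lt_sum
    (fun c _ ↦ mul_le_mul_of_nonneg_left (finsupp_prod_pow_le_prod_pow c hx hxy) (hp c))
    ⟨d, hd, mul_lt_mul_of_pos_left hlt coeff_pos⟩

variable [DecidableEq σ] {j k : σ} {m : ℕ}

theorem strictMonoOn_eval_piSingle (hp : ∀ d, 0 ≤ p.coeff d) (hm : m ≠ 0)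
    (hj : 0 < p.coeff (Finsupp.single j m)) :
    StrictMonoOn (fun t ↦ eval (Pi.single j t) p) (Set.Ici 0) := by
  intro s hs t _ hst
  refine eval_lt_eval_of_prod_lt_prod hp (Pi.single_nonneg.mpr hs) (Pi.single_mono j hst.le)
    (mem_support_iff.mpr hj.ne') ?_
  rw [finsuppSingle_prod_piSingle_pow, finsuppSingle_prod_piSingle_pow]
  exact pow_lt_pow_left₀ hst hs hm

theorem eval_piSingle_lt_eval_of_mem_vars (hp : ∀ d, 0 ≤ p.coeff d) (hx : ∀ i, 0 < x i)
    (hk : k ∈ p.vars) (hkj : k ≠ j) : eval (Pi.single j (x j)) p < eval x p := by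
  obtain ⟨d, hd, hkd⟩ := (mem_vars_iff_mem_support k).mp hk
  refine eval_lt_eval_of_prod_lt_prod hp (Pi.single_nonneg.mpr (hx j).le) ?_ hd ?_
  · intro i
    obtain rfl | hij := eq_or_ne i j
    · rw [Pi.single_eq_same]
    · rw [Pi.single_eq_of_ne hij]
      exact (hx i).le
  · have vanishes : (d.prod fun i e ↦ (Pi.single j (x j) : σ → R) i ^ e) = 0 :=
      Finset.prod_eq_zero hkd <| by
        simp only [Pi.single_eq_of_ne hkj, zero_pow (Finsupp.mem_support_iff.mp hkd)]
    rw [vanishes]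
    exact Finset.prod_pos fun i _ ↦ pow_pos (hx i) _

end Eval

section RealCoefficients

open MvPolynomial Filter Set

variable {σ : Type*} [DecidableEq σ]

theorem tendsto_eval_piSingle_atTop {p : MvPolynomial σ ℝ} {j : σ} {m : ℕ}
    (hp : ∀ d, 0 ≤ p.coeff d) (hm : m ≠ 0) (hj : 0 < p.coeff (Finsupp.single j m)) :
    Tendsto (fun t ↦ eval (Pi.single j t) p) atTop atTop := by
  refine tendsto_atTop_mono' _ ?_ ((tendsto_pow_atTop hm).const_mul_atTop hj)
  filter_upwards [eventually_ge_atTop 0] with t ht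
  rw [← finsuppSingle_prod_piSingle_pow j m t]
  exact coeff_mul_prod_le_eval hp (Pi.single_nonneg.mpr ht) (mem_support_iff.mpr hj.ne')

theorem exists_pos_eval_piSingle_eq {p : MvPolynomial σ ℝ} {j : σ} {m : ℕ} {c : ℝ}
    (hp : ∀ d, 0 ≤ p.coeff d) (hc : p.coeff 0 < c) (hm : m ≠ 0)
    (hj : 0 < p.coeff (Finsupp.single j m)) :
    ∃ t, 0 < t ∧ eval (Pi.single j t) p = c := by
  have eval_zero_eq : eval (Pi.single j 0) p = p.coeff 0 := by
    rw [Pi.single_zero, eval_zero, constantCoeff_eq]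
  have continuous_restriction : Continuous fun t : ℝ ↦ eval (Pi.single j t) p :=
    (continuous_eval p).comp (continuous_single (A := fun _ ↦ ℝ) j)
  obtain ⟨t, ht, rfl⟩ := isPreconnected_Ici.intermediate_value_Ici (self_mem_Ici (a := (0 : ℝ)))
    (le_principal_iff.mpr (Ici_mem_atTop 0)) continuous_restriction.continuousOn
    (tendsto_eval_piSingle_atTop hp hm hj) (eval_zero_eq.trans_le hc.le)
  refine ⟨t, lt_of_le_of_ne ht ?_, rfl⟩
  rintro rfl
  exact hc.ne' eval_zero_eq

end RealCoefficients

section Admissible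

open MvPolynomial Set

variable {σ : Type*}

/-- A tuple is admissible if each `P j` is a polynomial in the variable `j` alone. This is encoded
through the set of variables of `P j`, which may be empty, so that constants are allowed. -/
def IsAdmissible {R : Type*} [CommSemiring R] (P : σ → MvPolynomial σ R) : Prop :=
  ∀ j, (P j).vars ⊆ {j}

theorem isAdmissible_iff {R : Type*} [CommSemiring R] {P : σ → MvPolynomial σ R} :
    IsAdmissible P ↔ ∀ j, ∀ d ∈ (P j).support, ∀ k, k ≠ j → d k = 0 := by
  refine forall_congr' fun j ↦ ⟨fun h d hd k hkj ↦ ?_, fun h k hk ↦ ?_⟩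
  · by_contra hdk
    exact hkj <| Finset.mem_singleton.mp <| h <|
      (mem_vars_iff_mem_support k).mpr ⟨d, hd, Finsupp.mem_support_iff.mpr hdk⟩
  · obtain ⟨d, hd, hkd⟩ := (mem_vars_iff_mem_support k).mp hk
    rw [Finset.mem_singleton]
    by_contra hkj
    exact Finsupp.mem_support_iff.mp hkd (h d hd k hkj)

variable [DecidableEq σ]

theorem IsAdmissible.eval_eq_eval_piSingle {R : Type*} [CommSemiring R]
    {P : σ → MvPolynomial σ R} (hP : IsAdmissible P) (x : σ → R) (j : σ) :
    eval x (P j) = eval (Pi.single j (x j)) (P j) := by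
  refine eval₂Hom_congr' rfl (fun i hi _ ↦ ?_) rfl
  obtain rfl : i = j := Finset.mem_singleton.mp (hP j hi)
  exact (Pi.single_eq_same (M := fun _ ↦ R) i (x i)).symm

theorem isAdmissible_of_forall_eval_lt_one {P : σ → MvPolynomial σ ℝ}
    (hP : ∀ j d, 0 ≤ (P j).coeff d) (hconst : ∀ j, (P j).coeff 0 < 1)
    (hdiag : ∀ j, ∃ m ≠ 0, 0 < (P j).coeff (Finsupp.single j m))
    (h : ∀ x : σ → ℝ, (∀ i, 0 < x i) → (∀ i, eval (Pi.single i (x i)) (P i) < 1) →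
      ∀ j, eval x (P j) < 1) :
    IsAdmissible P := by
  choose m hm hPm using hdiag
  choose t t_pos eval_t using fun j ↦
    exists_pos_eval_piSingle_eq (hP j) (hconst j) (hm j) (hPm j)
  intro j
  have eval_smul_lt_one : ∀ s ∈ Ioo (0 : ℝ) 1, eval (s • t) (P j) < 1 := by
    intro s hs
    refine h _ (fun i ↦ mul_pos hs.1 (t_pos i)) (fun i ↦ ?_) j
    rw [← eval_t i]
    exact strictMonoOn_eval_piSingle (hP i) (hm i) (hPm i) (mul_pos hs.1 (t_pos i)).le (t_pos i).le
      (mul_lt_of_lt_one_left (t_pos i) hs.2)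
  have eval_le_one : eval t (P j) ≤ 1 := by
    have continuous_ray : Continuous fun s : ℝ ↦ eval (s • t) (P j) :=
      (continuous_eval (P j)).comp (by fun_prop)
    have one_mem_closure : (1 : ℝ) ∈ closure (Ioo 0 1) := by
      simp only [closure_Ioo zero_ne_one, right_mem_Icc, zero_le_one]
    simpa only [one_smul] using le_on_closure (fun s hs ↦ (eval_smul_lt_one s hs).le)
      continuous_ray.continuousOn continuousOn_const one_mem_closure
  intro k hk
  rw [Finset.mem_singleton]
  by_contra hkj
  have one_lt_eval : 1 < eval t (P j) :=
    (eval_t j).symm.trans_lt (eval_piSingle_lt_eval_of_mem_vars (hP j) t_pos hk hkj)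
  exact one_lt_eval.not_ge eval_le_one

end Admissible

section Phi

variable {n : ℕ}

/-- The products `∏_{k ≥ j} w k`. They provide a right inverse of `phi`. -/
def tailProd {M : Type*} [CommMonoid M] (w : Fin n → M) (j : Fin n) : M :=
  ∏ k ∈ Finset.Ici j, w k

theorem tailProd_of_lt {M : Type*} [CommMonoid M] (w : Fin n → M) {j : Fin n}
    (h : (j : ℕ) + 1 < n) : tailProd w j = w j * tailProd w ⟨j + 1, h⟩ := by
  have Ici_next : Finset.Ici (⟨j + 1, h⟩ : Fin n) = Finset.Ioi j := by
    ext k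
    simp only [Finset.mem_Ici, Finset.mem_Ioi, Fin.le_def, Fin.lt_def, Nat.succ_le_iff]
  rw [tailProd, tailProd, Ici_next, Finset.Ici_eq_cons_Ioi, Finset.prod_cons]

theorem tailProd_of_not_lt {M : Type*} [CommMonoid M] (w : Fin n → M) {j : Fin n}
    (h : ¬(j : ℕ) + 1 < n) : tailProd w j = w j := by
  have Ici_last : Finset.Ici j = {j} := by
    ext k
    simp only [Finset.mem_Ici, Finset.mem_singleton, Fin.le_def, Fin.ext_iff]
    omega
  rw [tailProd, Ici_last, Finset.prod_singleton]

theorem tailProd_ne_zero {M₀ : Type*} [CommMonoidWithZero M₀] [NoZeroDivisors M₀] [Nontrivial M₀]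
    {w : Fin n → M₀} {j : Fin n} (hw : ∀ k, j ≤ k → w k ≠ 0) : tailProd w j ≠ 0 :=
  Finset.prod_ne_zero_iff.mpr fun k hk ↦ hw k (Finset.mem_Ici.mp hk)

theorem phi_tailProd {w : Fin n → ℂ} (hw : ∀ j : Fin n, 1 ≤ (j : ℕ) → w j ≠ 0) :
    phi (tailProd w) = w := by
  funext j
  by_cases h : (j : ℕ) + 1 < n
  · have denominator_ne_zero : tailProd w ⟨j + 1, h⟩ ≠ 0 :=
      tailProd_ne_zero fun k hk ↦ hw k (Nat.le_of_add_left_le hk)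
    rw [phi, dif_pos h, tailProd_of_lt w h, mul_div_cancel_right₀ _ denominator_ne_zero]
  · rw [phi, dif_neg h, tailProd_of_not_lt w h]

theorem phi_apply_ne_zero {z : Fin n → ℂ} (hz : ∀ j : Fin n, 1 ≤ (j : ℕ) → z j ≠ 0) {j : Fin n}
    (hj : 1 ≤ (j : ℕ)) : phi z j ≠ 0 := by
  rw [phi]
  split_ifs with h
  · exact div_ne_zero (hz j hj) (hz _ (Nat.le_add_left 1 j))
  · exact hz j hj

theorem phi_image_hartogsTriangle (P : Fin n → MvPolynomial (Fin n) ℝ) :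
    phi '' HartogsTriangle P = {w : Fin n → ℂ | ∀ j : Fin n,
      MvPolynomial.eval (fun k ↦ ‖w k‖ ^ 2) (P j) < 1 ∧ (1 ≤ (j : ℕ) → w j ≠ 0)} := by
  ext w
  constructor
  · rintro ⟨z, ⟨hz, hPz⟩, rfl⟩ j
    exact ⟨hPz j, phi_apply_ne_zero hz⟩
  · intro hw
    have phi_section : phi (tailProd w) = w := phi_tailProd fun j ↦ (hw j).2
    refine ⟨tailProd w, ⟨fun j hj ↦ tailProd_ne_zero fun k hjk ↦ (hw k).2 (hj.trans hjk), ?_⟩,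
      phi_section⟩
    rw [phi_section]
    exact fun j ↦ (hw j).1

end Phi

theorem exists_norm_sq_eq {x : ℝ} (hx : 0 ≤ x) : ∃ w : ℂ, ‖w‖ ^ 2 = x :=
  ⟨(√x : ℝ), by rw [Complex.norm_real, Real.norm_eq_abs, sq_abs, Real.sq_sqrt hx]⟩

theorem stmt3_general {n : ℕ} (P : Fin n → MvPolynomial (Fin n) ℝ)
    (hcoeff : ∀ j d, 0 ≤ (P j).coeff d)
    (hconst : ∀ j, (P j).coeff 0 < 1)
    (hdiag : ∀ j : Fin n, ∃ m ≠ 0, 0 < (P j).coeff (Finsupp.single j m)) :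
    (∀ j : Fin n, ∀ d ∈ (P j).support, ∀ k : Fin n, k ≠ j → d k = 0) ↔
      phi '' HartogsTriangle P =
        {w : Fin n → ℂ | ∀ j : Fin n,
          MvPolynomial.eval (fun k => if k = j then ‖w j‖ ^ 2 else 0) (P j) < 1 ∧
          (1 ≤ (j : ℕ) → w j ≠ 0)} := by
  simp only [← isAdmissible_iff, phi_image_hartogsTriangle, ← Pi.single_apply]
  constructor
  · intro admissible
    ext w
    simp only [admissible.eval_eq_eval_piSingle (fun k ↦ ‖w k‖ ^ 2), Set.mem_ofPred_eq]
  · intro sets_eq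
    refine isAdmissible_of_forall_eval_lt_one hcoeff hconst hdiag fun x x_pos x_lt j ↦ ?_
    choose w norm_w using fun k ↦ exists_norm_sq_eq (x_pos k).le
    have w_ne_zero (k : Fin n) : w k ≠ 0 := by
      intro hk
      simpa [hk, (x_pos k).ne] using norm_w k
    have w_mem := (Set.ext_iff.mp sets_eq w).mpr fun k ↦
      ⟨by simpa only [norm_w] using x_lt k, fun _ ↦ w_ne_zero k⟩
    simpa only [norm_w] using (w_mem j).1

/-- a positive regular tuple `P` is admissible (each `P_j` only involves the
variable `z_j`) iff `φ(Δⁿ_P) = D₁ × (D₂∖{0}) × ⋯ × (Dₙ∖{0})`, where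
`D_j = {w ∈ ℂ : P_j(|w|²·ε_j) < 1}`. -/
theorem stmt3 {n : ℕ} (hn : 2 ≤ n) (P : Fin n → MvPolynomial (Fin n) ℝ)
    (hcoeff : ∀ j d, 0 ≤ (P j).coeff d)
    (hconst : ∀ j, (P j).coeff 0 = 0)
    (hlin : ∀ j k : Fin n, k ≠ j → (P j).coeff (Finsupp.single k 1) = 0)
    (hdiag : ∀ j : Fin n, 0 < (P j).coeff (Finsupp.single j 1)) :
    (∀ j : Fin n, ∀ d ∈ (P j).support, ∀ k : Fin n, k ≠ j → d k = 0) ↔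
      phi '' HartogsTriangle P =
        {w : Fin n → ℂ | ∀ j : Fin n,
          MvPolynomial.eval (fun k => if k = j then ‖w j‖ ^ 2 else 0) (P j) < 1 ∧
          (1 ≤ (j : ℕ) → w j ≠ 0)} :=
  stmt3_general P hcoeff (fun j => (hconst j).trans_lt one_pos)
    fun j => ⟨1, one_ne_zero, hdiag j⟩
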